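/- There exists a non-degenerate linear code C' over F_3 of length 32 and dimension 3 that is an MWS code (i.e., |S(C')| = q_3 = 13) with minimum distance d = 10 and spread Δ(C') = 50; in particular C' is an MWS code that is not strictly compact. -/

import Mathlib

open scoped Classical
open Finset

/-- `qk q k = (q^k - 1)/(q - 1)`, the number of nonzero weights an MWS code of dimension `k`
over a field with `q` elements has. -/
def qk (q k : ℕ) : ℕ := (q ^ k - 1) / (q - 1)

/-- The set of nonzero Hamming weights of a linear code `C ⊆ F^n`. -/
noncomputable def weightSet {F : Type*} [Field F] [Fintype F] {n : ℕ}
    (C : Submodule F (Fin n → F)) : Finset ℕ :=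
  Finset.image (fun c => hammingNorm c)
    (Finset.univ.filter fun c : Fin n → F => c ∈ C ∧ c ≠ 0)

/-- A code is non-degenerate if no coordinate is identically zero. -/
def Nondeg {F : Type*} [Field F] {n : ℕ} (C : Submodule F (Fin n → F)) : Prop :=
  ∀ i : Fin n, ∃ c ∈ C, c i ≠ 0

/-- Maximum weight spectrum code of dimension `k`. -/
def IsMWS {F : Type*} [Field F] [Fintype F] {n : ℕ}
    (C : Submodule F (Fin n → F)) (k : ℕ) : Prop :=
  (weightSet C).card = qk (Fintype.card F) k

/-- The spread of an MWS code. -/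
noncomputable def spread {F : Type*} [Field F] [Fintype F] {n : ℕ}
    (C : Submodule F (Fin n → F)) (k : ℕ) : ℤ :=
  (n : ℤ) * qk (Fintype.card F) k
    - ((qk (Fintype.card F) k * (qk (Fintype.card F) k - 1)) / 2 : ℕ)
    - ∑ w ∈ weightSet C, (w : ℤ)

/-- A compact MWS code: the weight set is an interval of `q_k` consecutive integers starting
at the minimum distance. -/
def IsCompactMWS {F : Type*} [Field F] [Fintype F] {n : ℕ}
    (C : Submodule F (Fin n → F)) (k : ℕ) : Prop :=
  IsMWS C k ∧ ∃ d, d ∈ weightSet C ∧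
    weightSet C = Finset.Icc d (d + qk (Fintype.card F) k - 1)

/-- A strictly compact MWS code: a compact MWS code whose length is itself a weight. -/
def IsStrictlyCompactMWS {F : Type*} [Field F] [Fintype F] {n : ℕ}
    (C : Submodule F (Fin n → F)) (k : ℕ) : Prop :=
  IsCompactMWS C k ∧ n ∈ weightSet C

/-!
Repeat the coordinates of the code of values `(a, b, c, a + b, b + c, a + c)` with multiplicities
`4, 2, 1, 15, 3, 7`. The weight of a word becomes the total multiplicity of the linear forms that
do not vanish at `(a, b, c)`, and these totals separate the thirteen points of the projective plane
over `F_3`.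

An MWS code of length `n` with weight set `S` has spread `∑ w ∈ S, (n - w) - ∑ i < q_k, i`, and
for a strictly compact code `w ↦ n - w` maps `S` onto `{0, …, q_k - 1}`. So its spread is zero,
whereas the code above has spread `50`.
-/

section WeightSet

variable {F : Type*} [Field F] [Fintype F] {n k : ℕ} {C : Submodule F (Fin n → F)}

lemma le_length_of_mem_weightSet {w : ℕ} (hw : w ∈ weightSet C) : w ≤ n := by
  obtain ⟨c, -, rfl⟩ := mem_image.1 hw
  exact hammingNorm_le_card_fintype.trans_eq (Fintype.card_fin n)

lemma weightSet_range_of_injective {V : Type*} [AddCommGroup V] [Module F V] [Fintype V]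
    [DecidableEq V] [DecidableEq F] {f : V →ₗ[F] Fin n → F} (hf : Function.Injective f) :
    weightSet (LinearMap.range f) = image (fun v => hammingNorm (f v)) {v | v ≠ 0} := by
  ext w
  simp only [weightSet, mem_image, mem_filter, mem_univ, true_and, LinearMap.mem_range]
  constructor
  · rintro ⟨_, ⟨⟨v, rfl⟩, hv⟩, rfl⟩
    exact ⟨v, (map_ne_zero_iff f hf).1 hv, by congr!⟩
  · rintro ⟨v, hv, rfl⟩
    exact ⟨f v, ⟨⟨v, rfl⟩, (map_ne_zero_iff f hf).2 hv⟩, by congr!⟩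

lemma IsMWS.spread_eq_sum_sub_sum_range (hC : IsMWS C k) :
    spread C k =
      ∑ w ∈ weightSet C, ((n : ℤ) - w) - ∑ i ∈ range (qk (Fintype.card F) k), (i : ℤ) := by
  have hcard : #(weightSet C) = qk (Fintype.card F) k := hC
  rw [spread, ← sum_range_id, sum_sub_distrib, sum_const, hcard, nsmul_eq_mul, Nat.cast_sum]
  ring

lemma IsStrictlyCompactMWS.weightSet_eq_Icc (hC : IsStrictlyCompactMWS C k) :
    weightSet C = Icc (n + 1 - qk (Fintype.card F) k) n := by
  obtain ⟨⟨hcard, d, hd, hS⟩, hn⟩ := hC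
  have hpos : 0 < qk (Fintype.card F) k := (card_pos.2 ⟨d, hd⟩).trans_eq hcard
  have hd_le : d ≤ d + qk (Fintype.card F) k - 1 := (mem_Icc.1 (hS ▸ hd)).2
  have hn_le : n ≤ d + qk (Fintype.card F) k - 1 := (mem_Icc.1 (hS ▸ hn)).2
  have hle_n : d + qk (Fintype.card F) k - 1 ≤ n :=
    le_length_of_mem_weightSet (hS ▸ right_mem_Icc.2 hd_le)
  rw [hS]
  congr 1 <;> omega

lemma IsStrictlyCompactMWS.spread_eq_zero (hC : IsStrictlyCompactMWS C k) : spread C k = 0 := by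
  have hMWS : IsMWS C k := hC.1.1
  have hle : qk (Fintype.card F) k ≤ n + 1 := by
    rw [IsMWS, hC.weightSet_eq_Icc, Nat.card_Icc] at hMWS
    omega
  rw [hMWS.spread_eq_sum_sub_sum_range, hC.weightSet_eq_Icc, sub_eq_zero]
  refine sum_nbij' (n - ·) (n - ·) ?_ ?_ ?_ ?_ ?_ <;>
    simp only [mem_Icc, mem_range] <;> omega

end WeightSet

lemma nondeg_range_vecMulLinear {F κ : Type*} [Field F] [Fintype κ] {n : ℕ}
    {G : Matrix κ (Fin n) F} (hG : ∀ j, G.col j ≠ 0) :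
    Nondeg (LinearMap.range G.vecMulLinear) := by
  intro j
  obtain ⟨i, hi⟩ := Function.ne_iff.1 (hG j)
  refine ⟨_, ⟨Pi.single i 1, rfl⟩, ?_⟩
  rwa [Matrix.vecMulLinear_apply, Matrix.single_one_vecMul]

lemma hammingNorm_comp_sigma_fst {β ι ν : Type*} [Zero β] [DecidableEq β] [Fintype ι] [Fintype ν]
    {m : ι → ℕ} (e : ν ≃ Σ i, Fin (m i)) (x : ι → β) :
    hammingNorm (fun j => x (e j).1) = ∑ i with x i ≠ 0, m i := by
  calc
    hammingNorm (fun j => x (e j).1)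
      = #(Finset.sigma {i | x i ≠ 0} fun i => (univ : Finset (Fin (m i)))) :=
        card_equiv e (by simp)
    _ = ∑ i with x i ≠ 0, m i := by simp only [card_sigma, card_univ, Fintype.card_fin]

/-- The generator matrix whose columns are the linear forms `a`, `b`, `c`, `a + b`, `b + c`,
`a + c` in the message `(a, b, c)`, before their repetition. -/
def linearForms : Matrix (Fin 3) (Fin 6) (ZMod 3) :=
  !![1, 0, 0, 1, 0, 1;
     0, 1, 0, 1, 1, 0;
     0, 0, 1, 0, 1, 1]

/-- How often each column of `linearForms` occurs in `generatorMatrix`. -/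
def formMultiplicity : Fin 6 → ℕ := ![4, 2, 1, 15, 3, 7]

/-- Labels each coordinate of the code by a linear form and the index of a copy of it. The order of
the coordinates does not affect weights, so the labelling is left unspecified. -/
noncomputable def coordinateEquiv : Fin 32 ≃ Σ i, Fin (formMultiplicity i) :=
  (Fintype.equivFinOfCardEq (by simp only [Fintype.card_sigma, Fintype.card_fin]; rfl)).symm

/-- The generator matrix of the `[32, 3]` code: `linearForms` with its columns repeated. -/
noncomputable def generatorMatrix : Matrix (Fin 3) (Fin 32) (ZMod 3) :=
  linearForms.submatrix id fun j => (coordinateEquiv j).1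

/-- The nonzero weights of the code generated by `generatorMatrix`. -/
def generatorWeights : Finset ℕ := {10, 11, 14, 16, 20, 22, 23, 25, 26, 28, 30, 31, 32}

lemma hammingNorm_vecMul_generatorMatrix (v : Fin 3 → ZMod 3) :
    hammingNorm (Matrix.vecMul v generatorMatrix) =
      ∑ i with Matrix.vecMul v linearForms i ≠ 0, formMultiplicity i :=
  hammingNorm_comp_sigma_fst coordinateEquiv (Matrix.vecMul v linearForms)

lemma image_hammingNorm_vecMul_generatorMatrix :
    image (fun v => hammingNorm (Matrix.vecMul v generatorMatrix)) {v | v ≠ 0} =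
      generatorWeights := by
  simp only [hammingNorm_vecMul_generatorMatrix]
  decide

lemma vecMulLinear_generatorMatrix_injective :
    Function.Injective generatorMatrix.vecMulLinear := by
  refine (injective_iff_map_eq_zero _).2 fun v hv => ?_
  by_contra hne
  have hmem : hammingNorm (generatorMatrix.vecMulLinear v) ∈ generatorWeights :=
    image_hammingNorm_vecMul_generatorMatrix ▸
      mem_image_of_mem _ (mem_filter.2 ⟨mem_univ v, hne⟩)
  rw [hv, hammingNorm_zero] at hmem
  exact absurd hmem (by decide)

lemma weightSet_range_generatorMatrix :
    weightSet (LinearMap.range generatorMatrix.vecMulLinear) = generatorWeights :=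
  (weightSet_range_of_injective vecMulLinear_generatorMatrix_injective).trans
    image_hammingNorm_vecMul_generatorMatrix

lemma col_generatorMatrix_ne_zero (j : Fin 32) : generatorMatrix.col j ≠ 0 := by
  have hcol : ∀ i, linearForms.col i ≠ 0 := by decide
  exact hcol (coordinateEquiv j).1

/-- There exists a non-degenerate $[32,3]_3$ MWS code $C'$ (so
$|S(C')| = q_3 = 13$) with minimum distance $d = 10$ and spread $Δ(C') = 50$; in
particular $C'$ is an MWS code which is not strictly compact. -/
theorem stmt_18 :
    ∃ C : Submodule (ZMod 3) (Fin 32 → ZMod 3),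
      Module.finrank (ZMod 3) C = 3 ∧
      Nondeg C ∧
      IsMWS C 3 ∧
      (weightSet C).card = 13 ∧
      (10 : ℕ) ∈ weightSet C ∧ (∀ w ∈ weightSet C, 10 ≤ w) ∧
      spread C 3 = 50 ∧
      ¬ IsStrictlyCompactMWS C 3 := by
  have hW := weightSet_range_generatorMatrix
  have hq : qk (Fintype.card (ZMod 3)) 3 = 13 := by rw [ZMod.card]; rfl
  have hcard : #generatorWeights = 13 := rfl
  have hsum : ∑ w ∈ generatorWeights, (w : ℤ) = 288 := rfl
  have hspread : spread (LinearMap.range generatorMatrix.vecMulLinear) 3 = 50 := by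
    rw [spread, hW, hq, hsum]
    norm_num
  refine ⟨LinearMap.range generatorMatrix.vecMulLinear, ?_,
    nondeg_range_vecMulLinear col_generatorMatrix_ne_zero, ?_, ?_, ?_, ?_, hspread, ?_⟩
  · rw [LinearMap.finrank_range_of_inj vecMulLinear_generatorMatrix_injective,
      Module.finrank_fin_fun]
  · rw [IsMWS, hW, hq, hcard]
  · rw [hW, hcard]
  · rw [hW]
    decide
  · rw [hW]
    decide
  · intro hC
    have hzero := hC.spread_eq_zero
    omega
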